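/- Let ρ > 0, let ψ : ℝ^d → ℝ be differentiable and ρ-strongly convex, let L ≥ 0, let g : ℝ^d → ℝ be L-Lipschitz, let f : ℝ^d → ℝ be measurable with 0 < ∫_{ℝ^d} e^{−(f+g)(x)} dx < ∞, and let λ > 0. Let π and π_λ^ψ be the probability measures with Lebesgue densities proportional to e^{−(f+g)} and e^{−(f + env_{λ,g}^ψ)} respectively, where env_{λ,g}^ψ denotes either the left or the right Bregman–Moreau envelope of g. Then for every measurable h : ℝ^d → ℝ that is integrable with respect to both π and π_λ^ψ, |E_{π_λ^ψ}[h] − E_π[h]| ≤ (e^{λL²/ρ} − 1) · min{ E_{π_λ^ψ}[|h|], E_π[|h|] }. -/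

import Mathlib

open scoped RealInnerProductSpace ENNReal
open MeasureTheory

/-- The Bregman divergence associated with a differentiable function `ψ`. -/
noncomputable def bregmanDiv {d : ℕ} (ψ : EuclideanSpace ℝ (Fin d) → ℝ)
    (x y : EuclideanSpace ℝ (Fin d)) : ℝ :=
  ψ x - ψ y - ⟪gradient ψ y, x - y⟫

/-- The left Bregman–Moreau envelope of `g` associated with `ψ`. -/
noncomputable def leftEnv {d : ℕ} (ψ g : EuclideanSpace ℝ (Fin d) → ℝ) (lam : ℝ)
    (x : EuclideanSpace ℝ (Fin d)) : ℝ :=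
  ⨅ y : EuclideanSpace ℝ (Fin d), (g y + (1 / lam) * bregmanDiv ψ y x)

/-- The right Bregman–Moreau envelope of `g` associated with `ψ`. -/
noncomputable def rightEnv {d : ℕ} (ψ g : EuclideanSpace ℝ (Fin d) → ℝ) (lam : ℝ)
    (x : EuclideanSpace ℝ (Fin d)) : ℝ :=
  ⨅ y : EuclideanSpace ℝ (Fin d), (g y + (1 / lam) * bregmanDiv ψ x y)

section BregmanDivergence

variable {d : ℕ} {ψ : EuclideanSpace ℝ (Fin d) → ℝ}

theorem bregmanDiv_self (x : EuclideanSpace ℝ (Fin d)) : bregmanDiv ψ x x = 0 := by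
  simp [bregmanDiv]

theorem continuous_bregmanDiv_left (hdiff : Differentiable ℝ ψ)
    (y : EuclideanSpace ℝ (Fin d)) : Continuous fun x => bregmanDiv ψ x y := by
  have hψ : Continuous ψ := hdiff.continuous
  unfold bregmanDiv
  fun_prop

theorem measurable_bregmanDiv_right (hdiff : Differentiable ℝ ψ)
    (x : EuclideanSpace ℝ (Fin d)) : Measurable fun y => bregmanDiv ψ x y := by
  have hψ : Measurable ψ := hdiff.continuous.measurable
  have hgrad : Measurable (gradient ψ) :=
    (InnerProductSpace.toDual ℝ
      (EuclideanSpace ℝ (Fin d))).symm.continuous.measurable.comp (measurable_fderiv ℝ ψ)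
  unfold bregmanDiv
  fun_prop

variable {ρ L lam : ℝ} {g : EuclideanSpace ℝ (Fin d) → ℝ}

/-- The penalized objective of either envelope loses at most `λL²/(2ρ)` compared with `g`. -/
theorem sub_le_add_of_quadratic_le (hρ : 0 < ρ) (hlam : 0 < lam)
    (hg : ∀ x y, |g x - g y| ≤ L * ‖x - y‖) {x y : EuclideanSpace ℝ (Fin d)} {D : ℝ}
    (hD : ρ / 2 * ‖x - y‖ ^ 2 ≤ D) :
    g x - lam * L ^ 2 / (2 * ρ) ≤ g y + (1 / lam) * D := by
  have hlip := (abs_le.1 (hg x y)).2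
  have hpen : (1 / lam) * (ρ / 2 * ‖x - y‖ ^ 2) ≤ (1 / lam) * D := by gcongr
  have hsq : L * ‖x - y‖ ≤ lam * L ^ 2 / (2 * ρ) + (1 / lam) * (ρ / 2 * ‖x - y‖ ^ 2) := by
    have hid : lam * L ^ 2 / (2 * ρ) + (1 / lam) * (ρ / 2 * ‖x - y‖ ^ 2) - L * ‖x - y‖
        = (lam * L - ρ * ‖x - y‖) ^ 2 / (2 * ρ * lam) := by
      field_simp
      ring
    have hnonneg : 0 ≤ (lam * L - ρ * ‖x - y‖) ^ 2 / (2 * ρ * lam) := by positivity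
    linarith
  linarith

theorem sub_le_iInf_and_iInf_le (hρ : 0 < ρ) (hlam : 0 < lam)
    (hg : ∀ x y, |g x - g y| ≤ L * ‖x - y‖) {x : EuclideanSpace ℝ (Fin d)}
    {D : EuclideanSpace ℝ (Fin d) → ℝ} (hD : ∀ y, ρ / 2 * ‖x - y‖ ^ 2 ≤ D y) (hDx : D x = 0) :
    g x - lam * L ^ 2 / (2 * ρ) ≤ (⨅ y, (g y + (1 / lam) * D y)) ∧
      (⨅ y, (g y + (1 / lam) * D y)) ≤ g x := by
  have hle := fun y => sub_le_add_of_quadratic_le hρ hlam hg (hD y)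
  refine ⟨le_ciInf hle, (ciInf_le ⟨_, Set.forall_mem_range.2 hle⟩ x).trans ?_⟩
  simp [hDx]

theorem measurable_leftEnv (hdiff : Differentiable ℝ ψ) (hg : Continuous g) :
    Measurable (leftEnv ψ g lam) := by
  obtain ⟨S, hSc, hSd⟩ := TopologicalSpace.exists_countable_dense (EuclideanSpace ℝ (Fin d))
  have := hSc.to_subtype
  have heq : leftEnv ψ g lam = fun x => ⨅ y : S, (g y + (1 / lam) * bregmanDiv ψ y x) := by
    funext x
    exact (hSd.ciInf' (hg.add ((continuous_bregmanDiv_left hdiff x).const_mul _))).symm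
  rw [heq]
  exact Measurable.iInf fun y =>
    ((measurable_bregmanDiv_right hdiff (y : EuclideanSpace ℝ (Fin d))).const_mul _).const_add _

theorem measurable_rightEnv (hdiff : Differentiable ℝ ψ)
    (hbdd : ∀ x, BddBelow (Set.range fun y => g y + (1 / lam) * bregmanDiv ψ x y)) :
    Measurable (rightEnv ψ g lam) :=
  (upperSemicontinuous_ciInf hbdd fun y =>
    (continuous_const.add
      ((continuous_bregmanDiv_left hdiff y).const_mul _)).upperSemicontinuous).measurable

end BregmanDivergence

/-- Expectations under two measures whose densities agree up to a factor `c`. -/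
theorem abs_integral_withDensity_sub_le {X : Type*} [MeasurableSpace X] {μ : Measure X}
    {u v : X → ℝ} {c : ℝ} (hu : Measurable u) (hv : Measurable v) (hu0 : ∀ x, 0 ≤ u x)
    (hv0 : ∀ x, 0 ≤ v x) (hvu : ∀ x, v x ≤ c * u x) (huv : ∀ x, u x ≤ c * v x)
    (hc : 1 ≤ c) {h : X → ℝ}
    (hhu : Integrable h (μ.withDensity fun x => ENNReal.ofReal (u x)))
    (hhv : Integrable h (μ.withDensity fun x => ENNReal.ofReal (v x))) :
    |(∫ x, h x ∂(μ.withDensity fun x => ENNReal.ofReal (v x))) -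
        ∫ x, h x ∂(μ.withDensity fun x => ENNReal.ofReal (u x))| ≤
      (c - 1) * ∫ x, |h x| ∂(μ.withDensity fun x => ENNReal.ofReal (u x)) := by
  have hhabs := hhu.abs
  have hlt (w : X → ℝ) : ∀ᵐ x ∂μ, ENNReal.ofReal (w x) < ∞ :=
    Filter.Eventually.of_forall fun _ => ENNReal.ofReal_lt_top
  rw [integrable_withDensity_iff_integrable_smul' hu.ennreal_ofReal (hlt u)] at hhu hhabs
  rw [integrable_withDensity_iff_integrable_smul' hv.ennreal_ofReal (hlt v)] at hhv
  simp only [integral_withDensity_eq_integral_toReal_smul hu.ennreal_ofReal (hlt u),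
    integral_withDensity_eq_integral_toReal_smul hv.ennreal_ofReal (hlt v)]
  rw [← integral_sub hhv hhu, ← integral_const_mul]
  refine (abs_integral_le_integral_abs).trans
    (integral_mono (hhv.sub hhu).abs (hhabs.const_mul _) fun x => ?_)
  simp only [ENNReal.toReal_ofReal (hu0 x), ENNReal.toReal_ofReal (hv0 x), smul_eq_mul,
    ← sub_mul, abs_mul, ← mul_assoc]
  refine mul_le_mul_of_nonneg_right (abs_le.2 ⟨?_, ?_⟩) (abs_nonneg _)
  · rcases le_total (u x) (v x) with huvx | hvux
    · nlinarith [hu0 x]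
    · nlinarith [hu0 x, huv x]
  · linarith [hvu x]

/-- For `h` integrable w.r.t. both Gibbs measures,
`|E_{π_λ^ψ}[h] − E_π[h]| ≤ (e^{λL²/ρ} − 1)·min{E_{π_λ^ψ}[|h|], E_π[|h|]}`. -/
theorem stmt8 {d : ℕ} (ρ : ℝ) (hρ : 0 < ρ)
    (ψ : EuclideanSpace ℝ (Fin d) → ℝ)
    (hdiff : Differentiable ℝ ψ)
    (hsc : ∀ y ytil : EuclideanSpace ℝ (Fin d),
      ψ ytil + ⟪gradient ψ ytil, y - ytil⟫ + ρ / 2 * ‖y - ytil‖ ^ 2 ≤ ψ y)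
    (L : ℝ) (hL : 0 ≤ L)
    (g : EuclideanSpace ℝ (Fin d) → ℝ)
    (hg : ∀ x y, |g x - g y| ≤ L * ‖x - y‖)
    (f : EuclideanSpace ℝ (Fin d) → ℝ) (hf : Measurable f)
    (hpos : 0 < ∫⁻ x, ENNReal.ofReal (Real.exp (-(f x + g x))))
    (hfin : (∫⁻ x, ENNReal.ofReal (Real.exp (-(f x + g x)))) < ∞)
    (lam : ℝ) (hlam : 0 < lam)
    (env : EuclideanSpace ℝ (Fin d) → ℝ)
    (henv : env = leftEnv ψ g lam ∨ env = rightEnv ψ g lam)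
    (π πlam : Measure (EuclideanSpace ℝ (Fin d)))
    (hπ : π = volume.withDensity fun x =>
      ENNReal.ofReal (Real.exp (-(f x + g x))) /
        ∫⁻ y, ENNReal.ofReal (Real.exp (-(f y + g y))))
    (hπlam : πlam = volume.withDensity fun x =>
      ENNReal.ofReal (Real.exp (-(f x + env x))) /
        ∫⁻ y, ENNReal.ofReal (Real.exp (-(f y + env y)))) :
    ∀ h : EuclideanSpace ℝ (Fin d) → ℝ, Measurable h →
      Integrable h π → Integrable h πlam →
      |(∫ x, h x ∂πlam) - ∫ x, h x ∂π| ≤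
        (Real.exp (lam * L ^ 2 / ρ) - 1) *
          min (∫ x, |h x| ∂πlam) (∫ x, |h x| ∂π) := by
  intro h _ hhπ hhπlam
  set δ := lam * L ^ 2 / (2 * ρ) with hδ
  have hδ0 : 0 ≤ δ := by positivity
  have hgc : Continuous g :=
    (LipschitzWith.of_dist_le_mul (K := ⟨L, hL⟩) fun x y => by
      rw [Real.dist_eq, dist_eq_norm]; exact hg x y).continuous
  have hB (y x : EuclideanSpace ℝ (Fin d)) : ρ / 2 * ‖y - x‖ ^ 2 ≤ bregmanDiv ψ y x := by
    have := hsc y x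
    unfold bregmanDiv
    linarith
  have henvb (x) : g x - δ ≤ env x ∧ env x ≤ g x := by
    rcases henv with rfl | rfl
    · exact sub_le_iInf_and_iInf_le hρ hlam hg
        (fun y => by rw [norm_sub_rev]; exact hB y x) (bregmanDiv_self x)
    · exact sub_le_iInf_and_iInf_le hρ hlam hg (fun y => hB x y) (bregmanDiv_self x)
  have henvm : Measurable env := by
    rcases henv with rfl | rfl
    · exact measurable_leftEnv hdiff hgc
    · exact measurable_rightEnv hdiff fun x =>
        ⟨_, Set.forall_mem_range.2 fun y => sub_le_add_of_quadratic_le hρ hlam hg (hB x y)⟩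
  set p := fun x => Real.exp (-(f x + g x)) with hp
  set q := fun x => Real.exp (-(f x + env x)) with hq
  have hpm : Measurable p := (hf.add hgc.measurable).neg.exp
  have hqm : Measurable q := (hf.add henvm).neg.exp
  have hpq (x) : p x ≤ q x := Real.exp_le_exp.2 (by linarith [(henvb x).2])
  have hqp (x) : q x ≤ Real.exp δ * p x := by
    rw [← Real.exp_add]
    exact Real.exp_le_exp.2 (by linarith [(henvb x).1])
  set Z := ∫⁻ x, ENNReal.ofReal (p x) with hZ
  set W := ∫⁻ x, ENNReal.ofReal (q x)
  have hZW : Z ≤ W := lintegral_mono fun x => ENNReal.ofReal_le_ofReal (hpq x)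
  have hWZ : W ≤ ENNReal.ofReal (Real.exp δ) * Z := by
    rw [hZ, ← lintegral_const_mul _ hpm.ennreal_ofReal]
    refine lintegral_mono fun x => ?_
    rw [← ENNReal.ofReal_mul (Real.exp_pos _).le]
    exact ENNReal.ofReal_le_ofReal (hqp x)
  have hWfin : W < ∞ := hWZ.trans_lt (ENNReal.mul_lt_top ENNReal.ofReal_lt_top hfin)
  have hZ0 : 0 < Z.toReal := ENNReal.toReal_pos hpos.ne' hfin.ne
  have hW0 : 0 < W.toReal := ENNReal.toReal_pos (hpos.trans_le hZW).ne' hWfin.ne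
  have hZWr : Z.toReal ≤ W.toReal := ENNReal.toReal_mono hWfin.ne hZW
  have hWZr : W.toReal ≤ Real.exp δ * Z.toReal := by
    have := ENNReal.toReal_mono (ENNReal.mul_lt_top ENNReal.ofReal_lt_top hfin).ne hWZ
    rwa [ENNReal.toReal_mul, ENNReal.toReal_ofReal (Real.exp_pos _).le] at this
  have hπ' : π = volume.withDensity fun x => ENNReal.ofReal (p x / Z.toReal) := by
    simp only [hπ, hp, ENNReal.ofReal_div_of_pos hZ0, ENNReal.ofReal_toReal hfin.ne]
  have hπlam' : πlam = volume.withDensity fun x => ENNReal.ofReal (q x / W.toReal) := by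
    simp only [hπlam, hq, ENNReal.ofReal_div_of_pos hW0, ENNReal.ofReal_toReal hWfin.ne]
  have hp0 (x) : 0 ≤ p x := (Real.exp_pos _).le
  have hq0 (x) : 0 ≤ q x := (Real.exp_pos _).le
  have hu0 (x) : 0 ≤ p x / Z.toReal := div_nonneg (hp0 x) hZ0.le
  have hv0 (x) : 0 ≤ q x / W.toReal := div_nonneg (hq0 x) hW0.le
  have hvu (x) : q x / W.toReal ≤ Real.exp δ * (p x / Z.toReal) := by
    rw [← mul_div_assoc]
    exact div_le_div₀ ((hq0 x).trans (hqp x)) (hqp x) hZ0 hZWr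
  have huv (x) : p x / Z.toReal ≤ Real.exp δ * (q x / W.toReal) := by
    rw [← mul_div_assoc, div_le_div_iff₀ hZ0 hW0]
    calc p x * W.toReal ≤ q x * (Real.exp δ * Z.toReal) :=
          mul_le_mul (hpq x) hWZr hW0.le (hq0 x)
      _ = Real.exp δ * q x * Z.toReal := by ring
  have hc : 1 ≤ Real.exp δ := Real.one_le_exp hδ0
  have hcle : Real.exp δ - 1 ≤ Real.exp (lam * L ^ 2 / ρ) - 1 := by
    have h2δ : lam * L ^ 2 / ρ = 2 * δ := by
      rw [hδ]
      field_simp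
    rw [h2δ]
    exact sub_le_sub_right (Real.exp_le_exp.2 (by linarith)) _
  rw [hπ'] at hhπ
  rw [hπlam'] at hhπlam
  have hum : Measurable fun x => p x / Z.toReal := hpm.div_const _
  have hvm : Measurable fun x => q x / W.toReal := hqm.div_const _
  have hbπ := abs_integral_withDensity_sub_le hum hvm hu0 hv0 hvu huv hc hhπ hhπlam
  have hbπlam := abs_integral_withDensity_sub_le hvm hum hv0 hu0 huv hvu hc hhπlam hhπ
  rw [abs_sub_comm] at hbπlam
  rw [← hπ', ← hπlam'] at hbπ hbπlam
  refine le_trans ?_ (mul_le_mul_of_nonneg_right hcle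
    (le_min (integral_nonneg fun _ => abs_nonneg _) (integral_nonneg fun _ => abs_nonneg _)))
  rw [mul_min_of_nonneg _ _ (sub_nonneg.2 hc)]
  exact le_min hbπlam hbπ
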